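/- Let 0 < s ≤ t. Then ∫_{0}^{∞} P(B_s > z) · P(B_t > z) dz = (√s + √t − √(s+t))/(2√(2π)), i.e. ∫_{0}^{∞} (1 − Φ_s(z)) · (1 − Φ_t(z)) dz = (√s + √t − √(s+t))/(2√(2π)), where Φ_v(z) denotes the cumulative distribution function of the centered Gaussian measure on ℝ with variance v. -/

import Mathlib

open MeasureTheory ProbabilityTheory Real Set

/-- The cumulative distribution function `Φ_v(z)` of the centered Gaussian
measure on `ℝ` with variance `v`. -/
noncomputable def gaussianCdf (v : ℝ) (z : ℝ) : ℝ :=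
  (ProbabilityTheory.gaussianReal 0 v.toNNReal (Set.Iic z)).toReal

/-!
Let `X ∼ N(0, s)` and `Y ∼ N(0, t)` be independent. By the layer cake formula the integral is
`E[max (min X Y) 0]`. Since `(X, Y)` and `(-X, -Y)` have the same law, averaging over the sign and
using `max (min x y) 0 + max (min (-x) (-y)) 0 = (|x| + |y| - |x - y|) / 2` gives
`(E|X| + E|Y| - E|X - Y|) / 4`. Finally `X - Y ∼ N(0, s + t)` and `E|N(0, v)| = √(2 / π) * √v`.
-/

open scoped NNReal

lemma max_min_zero_add_max_min_neg_zero {α : Type*} [Field α] [LinearOrder α]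
    [IsStrictOrderedRing α] (x y : α) :
    max (min x y) 0 + max (min (-x) (-y)) 0 = (|x| + |y| - |x - y|) / 2 := by
  grind

lemma isNegInvariant_prod {G H : Type*} [MeasurableSpace G] [MeasurableSpace H]
    [Neg G] [Neg H] [MeasurableNeg G] [MeasurableNeg H]
    (μ : Measure G) (ν : Measure H) [SFinite μ] [SFinite ν]
    [μ.IsNegInvariant] [ν.IsNegInvariant] : (μ.prod ν).IsNegInvariant where
  neg_eq_self :=
    ((Measure.measurePreserving_neg μ).prod (Measure.measurePreserving_neg ν)).map_eq

lemma integrable_max_min_zero {Ω : Type*} [MeasurableSpace Ω] {μ : Measure Ω} {f g : Ω → ℝ}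
    (hf : Integrable f μ) (hg : Integrable g μ) :
    Integrable (fun ω ↦ max (min (f ω) (g ω)) 0) μ :=
  (hf.inf hg).pos_part

lemma integral_max_min_zero_of_isNegInvariant {ρ : Measure (ℝ × ℝ)} [ρ.IsNegInvariant]
    (hfst : Integrable Prod.fst ρ) (hsnd : Integrable Prod.snd ρ) :
    ∫ p, max (min p.1 p.2) 0 ∂ρ
      = (∫ p, |p.1| ∂ρ + ∫ p, |p.2| ∂ρ - ∫ p, |p.1 - p.2| ∂ρ) / 4 := by
  have hint := integrable_max_min_zero hfst hsnd
  have hsub : Integrable (fun p ↦ |p.1 - p.2|) ρ := (hfst.sub hsnd).abs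
  have hneg := integral_neg_eq_self (fun p : ℝ × ℝ ↦ max (min p.1 p.2) 0) ρ
  have hsum : ∫ p, max (min p.1 p.2) 0 ∂ρ + ∫ p, max (min (-p).1 (-p).2) 0 ∂ρ
      = (∫ p, |p.1| ∂ρ + ∫ p, |p.2| ∂ρ - ∫ p, |p.1 - p.2| ∂ρ) / 2 := by
    rw [← integral_add hint hint.comp_neg, ← integral_add hfst.abs hsnd.abs,
      ← integral_sub (hfst.abs.fun_add hsnd.abs) hsub, ← integral_div]
    exact integral_congr_ae (.of_forall fun p ↦ max_min_zero_add_max_min_neg_zero p.1 p.2)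
  linarith

lemma integral_real_Ioi_mul_real_Ioi {μ ν : Measure ℝ} [IsFiniteMeasure μ] [IsFiniteMeasure ν]
    (hμ : Integrable id μ) (hν : Integrable id ν) :
    ∫ z in Ioi (0 : ℝ), μ.real (Ioi z) * ν.real (Ioi z)
      = ∫ p, max (min p.1 p.2) 0 ∂μ.prod ν := by
  have hint : Integrable (fun p ↦ max (min p.1 p.2) 0) (μ.prod ν) :=
    integrable_max_min_zero (hμ.comp_fst ν) (hν.comp_snd μ)
  rw [hint.integral_eq_integral_meas_lt (.of_forall fun p ↦ le_max_right _ _)]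
  refine setIntegral_congr_fun measurableSet_Ioi fun z (hz : 0 < z) ↦ ?_
  have hset : {p : ℝ × ℝ | z < max (min p.1 p.2) 0} = Ioi z ×ˢ Ioi z := by
    ext p
    simp [hz.not_gt]
  rw [hset, measureReal_prod_prod]

theorem integral_real_Ioi_mul_real_Ioi_of_isNegInvariant {μ ν : Measure ℝ}
    [IsProbabilityMeasure μ] [IsProbabilityMeasure ν] [μ.IsNegInvariant] [ν.IsNegInvariant]
    (hμ : Integrable id μ) (hν : Integrable id ν) :
    ∫ z in Ioi (0 : ℝ), μ.real (Ioi z) * ν.real (Ioi z)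
      = (∫ x, |x| ∂μ + ∫ y, |y| ∂ν - ∫ p, |p.1 - p.2| ∂μ.prod ν) / 4 := by
  have := isNegInvariant_prod μ ν
  rw [integral_real_Ioi_mul_real_Ioi hμ hν,
    integral_max_min_zero_of_isNegInvariant (hμ.comp_fst ν) (hν.comp_snd μ),
    integral_fun_fst (fun x : ℝ ↦ |x|), integral_fun_snd (fun y : ℝ ↦ |y|)]
  simp

lemma isNegInvariant_gaussianReal_zero (v : ℝ≥0) : (gaussianReal 0 v).IsNegInvariant where
  neg_eq_self := gaussianReal_map_neg.trans (by rw [neg_zero])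

lemma map_sub_gaussianReal_prod_gaussianReal (m₁ m₂ : ℝ) (v₁ v₂ : ℝ≥0) :
    ((gaussianReal m₁ v₁).prod (gaussianReal m₂ v₂)).map (fun p ↦ p.1 - p.2)
      = gaussianReal (m₁ - m₂) (v₁ + v₂) := by
  have hindep : IndepFun Prod.fst (fun p ↦ -p.2) ((gaussianReal m₁ v₁).prod (gaussianReal m₂ v₂)) :=
    indepFun_prod measurable_id measurable_neg
  have hfst : ((gaussianReal m₁ v₁).prod (gaussianReal m₂ v₂)).map Prod.fst
      = gaussianReal m₁ v₁ := measurePreserving_fst.map_eq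
  have hsnd : ((gaussianReal m₁ v₁).prod (gaussianReal m₂ v₂)).map (fun p ↦ -p.2)
      = gaussianReal (-m₂) v₂ :=
    (gaussianReal_neg ⟨by fun_prop, measurePreserving_snd.map_eq⟩).map_eq
  simpa only [sub_eq_add_neg] using! gaussianReal_add_gaussianReal_of_indepFun hindep hfst hsnd

lemma integral_Ioi_mul_exp_neg_mul_sq {b : ℝ} (hb : 0 < b) :
    ∫ x in Ioi (0 : ℝ), x * exp (-b * x ^ 2) = (2 * b)⁻¹ := by
  have h := integral_rpow_mul_exp_neg_mul_rpow (p := 2) (q := 1) two_pos (by norm_num) hb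
  have hone : ((1 : ℝ) + 1) / 2 = 1 := by norm_num
  simp only [rpow_one, rpow_two, neg_div, hone, rpow_neg_one, Gamma_one] at h
  rw [h]
  ring

lemma integral_abs_gaussianReal_zero (v : ℝ≥0) :
    ∫ x, |x| ∂gaussianReal 0 v = √(2 / π) * √v := by
  rcases eq_or_ne v 0 with rfl | hv
  · simp [gaussianReal_zero_var]
  have hv' : (0 : ℝ) < v := by positivity
  have hpdf (x : ℝ) : gaussianPDFReal 0 v x • |x|
      = (√(2 * π * v))⁻¹ * (|x| * exp (-(2 * (v : ℝ))⁻¹ * |x| ^ 2)) := by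
    simp only [gaussianPDFReal, smul_eq_mul, sq_abs, sub_zero, div_eq_inv_mul, mul_neg, neg_mul]
    ring
  calc ∫ x, |x| ∂gaussianReal 0 v
      = ∫ x, (√(2 * π * v))⁻¹ * (|x| * exp (-(2 * (v : ℝ))⁻¹ * |x| ^ 2)) := by
        simp_rw [integral_gaussianReal_eq_integral_smul hv, hpdf]
    _ = (√(2 * π * v))⁻¹ * (2 * v) := by
        rw [integral_const_mul, integral_comp_abs (f := fun x ↦ x * exp (-(2 * (v : ℝ))⁻¹ * x ^ 2)),
          integral_Ioi_mul_exp_neg_mul_sq (by positivity)]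
        field_simp
    _ = √(2 / π) * √v := by
        rw [sqrt_mul (by positivity), sqrt_mul zero_le_two, sqrt_div zero_le_two]
        field_simp
        rw [sq_sqrt zero_le_two, sq_sqrt hv'.le]

lemma integral_abs_sub_gaussianReal_prod_gaussianReal (s t : ℝ≥0) :
    ∫ p, |p.1 - p.2| ∂(gaussianReal 0 s).prod (gaussianReal 0 t) = √(2 / π) * √(s + t) := by
  have hlaw := map_sub_gaussianReal_prod_gaussianReal 0 0 s t
  rw [sub_zero] at hlaw
  rw [← NNReal.coe_add, ← integral_abs_gaussianReal_zero, ← hlaw,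
    integral_map (by fun_prop) (by fun_prop)]

lemma one_sub_gaussianCdf (v z : ℝ) :
    1 - gaussianCdf v z = (gaussianReal 0 v.toNNReal).real (Ioi z) := by
  rw [← compl_Iic, probReal_compl_eq_one_sub measurableSet_Iic]
  rfl

theorem integral_gaussian_tail_mul_tail_general {s t : ℝ} (hs : 0 ≤ s) (ht : 0 ≤ t) :
    ∫ z in Ioi (0 : ℝ), (1 - gaussianCdf s z) * (1 - gaussianCdf t z)
      = (√s + √t - √(s + t)) / (2 * √(2 * π)) := by
  have := isNegInvariant_gaussianReal_zero
  simp only [one_sub_gaussianCdf]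
  rw [integral_real_Ioi_mul_real_Ioi_of_isNegInvariant IsGaussian.integrable_id
      IsGaussian.integrable_id, integral_abs_sub_gaussianReal_prod_gaussianReal,
    integral_abs_gaussianReal_zero, integral_abs_gaussianReal_zero, coe_toNNReal s hs,
    coe_toNNReal t ht, sqrt_div zero_le_two, sqrt_mul zero_le_two]
  field_simp
  rw [sq_sqrt zero_le_two]
  ring

/-- Formula (4.8): for `0 < s ≤ t`,
`∫_0^{∞} P(B_s > z) P(B_t > z) dz = (√s + √t − √(s+t))/(2√(2π))`. -/
theorem integral_gaussian_tail_mul_tail (s t : ℝ) (hs : 0 < s) (hst : s ≤ t) :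
    ∫ z in Set.Ioi (0 : ℝ), (1 - gaussianCdf s z) * (1 - gaussianCdf t z)
      = (Real.sqrt s + Real.sqrt t - Real.sqrt (s + t)) / (2 * Real.sqrt (2 * Real.pi)) :=
  integral_gaussian_tail_mul_tail_general hs.le (hs.le.trans hst)
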